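/- Let G be a finite group generated by two distinct non-identity elements g1 and g2. The simplified Frucht graph Γ_{G,g1,g2} admits a cycle double cover consisting of: the triangles ((1,g),(2,g),(3,g)) and the pentagons ((1,g),(2,g),(6,g),(5,g),(4,g)) for each g ∈ G; for each left coset g⟨g2⟩ one cycle of length 2·ord(g2) visiting the vertices (6,g·g2^k),(5,g·g2^k) in the order (6,g),(5,g),(6,g·g2),(5,g·g2),…; for each left coset g⟨g1⟩ one cycle of length 3·ord(g1) visiting (4,g·g1^k),(1,g·g1^k),(3,g·g1^k) in the order (4,g),(1,g),(3,g),(4,g·g1),…; and for each left coset g⟨g1·g2⟩ one cycle of length 5·ord(g1·g2) visiting the vertices in the order (6,g),(2,g),(3,g),(4,g·g1),(5,g·g1),(6,g·g1·g2),…. This cycle double cover is invariant under every graph automorphism of the form (i,h) ↦ (i,m·h) with m ∈ G. Moreover, if ⟨g1⟩ ∩ ⟨g1·g2⟩ and ⟨g2⟩ ∩ ⟨g1·g2⟩ are both trivial, then no two distinct cycles of this cover share more than one common edge. -/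

import Mathlib

/-- The simplified Frucht graph `Γ_{G,g1,g2}`: vertex set `{1,…,6} × G` (labels `1,…,6`
are encoded as `0,…,5 : Fin 6`), with edges, for every `g ∈ G`:
`{(1,g),(2,g)}, {(2,g),(3,g)}, {(1,g),(3,g)}, {(1,g),(4,g)}, {(2,g),(6,g)},
{(5,g),(6,g)}, {(4,g),(5,g)}`, together with `{(3,g),(4,g·g1)}` and `{(5,g),(6,g·g2)}`. -/
def fruchtGraph (G : Type*) [Group G] (g1 g2 : G) : SimpleGraph (Fin 6 × G) :=
  SimpleGraph.fromEdgeSet (⋃ g : G,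
    {s((0, g), (1, g)), s((1, g), (2, g)), s((0, g), (2, g)), s((0, g), (3, g)),
     s((1, g), (5, g)), s((4, g), (5, g)), s((3, g), (4, g)),
     s((2, g), (3, g * g1)), s((4, g), (5, g * g2))})

/-- The edges of a vertex list regarded as a closed cyclic sequence. -/
def cycleEdges {V : Type*} (l : List V) : List (Sym2 V) :=
  List.zipWith (fun a b => s(a, b)) l (l.rotate 1)

/-- `l` is a cycle of `Γ`: at least three pairwise distinct vertices, any two cyclically
consecutive ones being adjacent in `Γ`. -/
def IsCycleList {V : Type*} (Γ : SimpleGraph V) (l : List V) : Prop :=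
  3 ≤ l.length ∧ l.Nodup ∧ ∀ e ∈ cycleEdges l, e ∈ Γ.edgeSet

open scoped Classical in
/-- A cycle double cover: a family of cycles, counted with multiplicity, such that every
edge of `Γ` lies on exactly two members of the family. -/
def IsCycleDoubleCover {V : Type*} (Γ : SimpleGraph V) (cs : Multiset (List V)) : Prop :=
  (∀ l ∈ cs, IsCycleList Γ l) ∧
  ∀ e ∈ Γ.edgeSet, (cs.map fun l => if e ∈ cycleEdges l then 1 else 0).sum = 2

open scoped Classical in
/-- The explicit cycle double cover of the simplified Frucht graph: the triangles
`((1,g),(2,g),(3,g))` and pentagons `((1,g),(2,g),(6,g),(5,g),(4,g))` for `g ∈ G`;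
for each left coset of `⟨g2⟩` a cycle `(6,g),(5,g),(6,g·g2),(5,g·g2),…` of length
`2·ord(g2)`; for each left coset of `⟨g1⟩` a cycle `(4,g),(1,g),(3,g),(4,g·g1),…` of
length `3·ord(g1)`; and for each left coset of `⟨g1·g2⟩` a cycle
`(6,g),(2,g),(3,g),(4,g·g1),(5,g·g1),(6,g·g1·g2),…` of length `5·ord(g1·g2)`. -/
noncomputable def fruchtCDC (G : Type*) [Group G] [Fintype G] (g1 g2 : G) :
    Multiset (List (Fin 6 × G)) :=
  (Finset.univ : Finset G).val.map (fun g => [((0 : Fin 6), g), (1, g), (2, g)]) +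
  (Finset.univ : Finset G).val.map
    (fun g => [((0 : Fin 6), g), (1, g), (5, g), (4, g), (3, g)]) +
  (Finset.univ : Finset (G ⧸ Subgroup.zpowers g2)).val.map (fun q =>
    (List.range (orderOf g2)).flatMap fun k =>
      [((5 : Fin 6), q.out * g2 ^ k), (4, q.out * g2 ^ k)]) +
  (Finset.univ : Finset (G ⧸ Subgroup.zpowers g1)).val.map (fun q =>
    (List.range (orderOf g1)).flatMap fun k =>
      [((3 : Fin 6), q.out * g1 ^ k), (0, q.out * g1 ^ k), (2, q.out * g1 ^ k)]) +
  (Finset.univ : Finset (G ⧸ Subgroup.zpowers (g1 * g2))).val.map (fun q =>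
    (List.range (orderOf (g1 * g2))).flatMap fun k =>
      [((5 : Fin 6), q.out * (g1 * g2) ^ k), (1, q.out * (g1 * g2) ^ k),
       (2, q.out * (g1 * g2) ^ k), (3, q.out * (g1 * g2) ^ k * g1),
       (4, q.out * (g1 * g2) ^ k * g1)])


namespace FruchtAux

def pathE {V : Type*} (l : List V) : List (Sym2 V) :=
  List.zipWith (fun a b => s(a, b)) l l.tail

theorem pathE_append {V : Type*} (l : List V) (a : V) (l' : List V) :
    pathE (l ++ a :: l') = pathE (l ++ [a]) ++ pathE (a :: l') := by
  induction l with
  | nil => simp [pathE]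
  | cons x l ih =>
    cases l with
    | nil => simp [pathE]
    | cons y l => simpa [pathE] using ih

theorem zipWith_app {V W : Type*} (f : V → V → W) (l l' r : List V) (h : r.length ≤ l.length) :
    List.zipWith f (l ++ l') r = List.zipWith f l r := by
  induction l generalizing r with
  | nil => simp at h; subst h; simp
  | cons x l ih =>
    cases r with
    | nil => simp
    | cons y r => simp at h; simp [ih r h]

theorem cycleEdges_cons {V : Type*} (a : V) (t : List V) :
    cycleEdges (a :: t) = pathE (a :: t ++ [a]) := by
  unfold cycleEdges pathE
  rw [zipWith_app _ (a :: t) [a] _ (by simp)]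
  simp

theorem pathE_flatMap {V : Type*} (b : ℕ → V) (t : ℕ → List V) (n : ℕ) :
    pathE ((List.range n).flatMap (fun k => b k :: t k) ++ [b n]) =
      (List.range n).flatMap (fun k => pathE (b k :: t k ++ [b (k + 1)])) := by
  induction n with
  | zero => simp [pathE]
  | succ n ih =>
    rw [List.range_succ, List.flatMap_append, List.flatMap_append, ← ih]
    simp only [List.flatMap_cons, List.flatMap_nil, List.append_nil, List.append_assoc,
      List.cons_append]
    rw [pathE_append]

theorem cycleEdges_flatMap {V : Type*} (b : ℕ → V) (t : ℕ → List V) (n : ℕ) (hn : 0 < n)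
    (hb : b n = b 0) :
    cycleEdges ((List.range n).flatMap (fun k => b k :: t k)) =
      (List.range n).flatMap (fun k => pathE (b k :: t k ++ [b (k + 1)])) := by
  rw [← pathE_flatMap, hb]
  obtain ⟨m, rfl⟩ : ∃ m, n = m + 1 := ⟨n - 1, by omega⟩
  rw [List.range_succ_eq_map, List.flatMap_cons, List.cons_append, cycleEdges_cons]

variable {G : Type*} [Group G] [Fintype G]

theorem coset_iff (c y : G) (q : G ⧸ Subgroup.zpowers c) :
    (y : G ⧸ Subgroup.zpowers c) = q ↔ ∃ k < orderOf c, q.out * c ^ k = y := by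
  classical
  conv_lhs => rw [← QuotientGroup.out_eq' q, eq_comm, QuotientGroup.eq]
  rw [← mem_powers_iff_mem_zpowers, mem_powers_iff_mem_range_orderOf]
  simp only [Finset.mem_image, Finset.mem_range]
  constructor
  · rintro ⟨k, hk, h⟩
    exact ⟨k, hk, by rw [h]; group⟩
  · rintro ⟨k, hk, h⟩
    exact ⟨k, hk, by rw [← h]; group⟩

theorem mem_cyc {V : Type*} (c : G) (b : G → V) (t : G → List V) (q : G ⧸ Subgroup.zpowers c)
    (e : Sym2 V) :
    e ∈ cycleEdges ((List.range (orderOf c)).flatMap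
      (fun k => b (q.out * c ^ k) :: t (q.out * c ^ k))) ↔
    ∃ y : G, (y : G ⧸ Subgroup.zpowers c) = q ∧ e ∈ pathE (b y :: t y ++ [b (y * c)]) := by
  rw [cycleEdges_flatMap (fun k => b (q.out * c ^ k)) (fun k => t (q.out * c ^ k)) _
    (orderOf_pos c) (by simp [pow_orderOf_eq_one])]
  simp only [List.mem_flatMap, List.mem_range, coset_iff]
  constructor
  · rintro ⟨k, hk, h⟩
    refine ⟨_, ⟨k, hk, rfl⟩, ?_⟩
    rwa [mul_assoc, ← pow_succ]
  · rintro ⟨y, ⟨k, hk, rfl⟩, h⟩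
    refine ⟨k, hk, ?_⟩
    rwa [mul_assoc, ← pow_succ] at h

theorem nodup_cyc {V : Type*} (c : G) (B : G → List V) (x : G)
    (h1 : ∀ y, (B y).Nodup) (h2 : ∀ y z, y ≠ z → (B y).Disjoint (B z)) :
    ((List.range (orderOf c)).flatMap (fun k => B (x * c ^ k))).Nodup := by
  rw [List.nodup_flatMap]
  refine ⟨fun _ _ => h1 _, ?_⟩
  refine List.Pairwise.imp_of_mem ?_ (List.nodup_range (n := orderOf c))
  intro i j hi hj hij
  apply h2
  intro h
  exact hij (pow_injOn_Iio_orderOf (by simpa using hi) (by simpa using hj)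
    (mul_left_cancel h))

theorem rot_flatMap {V : Type*} (F : ℕ → List V) (n j : ℕ) (hj : j ≤ n)
    (hF : ∀ k, F (n + k) = F k) :
    ∃ r, ((List.range n).flatMap F).rotate r =
      (List.range n).flatMap (fun k => F (j + k)) := by
  obtain ⟨m, rfl⟩ := Nat.exists_eq_add_of_le hj
  refine ⟨((List.range j).flatMap F).length, ?_⟩
  have e1 : List.range (j + m) = List.range j ++ (List.range m).map (j + ·) := by
    rw [List.range_add]
  have e2 : List.range (j + m) = List.range m ++ (List.range j).map (m + ·) := by
    rw [add_comm, List.range_add]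
  conv_lhs => rw [e1, List.flatMap_append, List.rotate_append_length_eq]
  rw [e2, List.flatMap_append, List.flatMap_map, List.flatMap_map]
  congr 1
  apply List.flatMap_congr
  intro k _
  rw [← add_assoc, hF]

theorem rel_cyc {V : Type*} (c m : G) (B : G → List V) (f : V → V)
    (hf : ∀ y, (B y).map f = B (m * y)) (I : Fintype (G ⧸ Subgroup.zpowers c)) :
    Multiset.Rel (fun l₁ l₂ : List V => ∃ k, l₁.rotate k = l₂)
      (((Finset.univ : Finset (G ⧸ Subgroup.zpowers c)).val.map (fun q =>
        (List.range (orderOf c)).flatMap fun k => B (q.out * c ^ k))).map (List.map f))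
      ((Finset.univ : Finset (G ⧸ Subgroup.zpowers c)).val.map (fun q =>
        (List.range (orderOf c)).flatMap fun k => B (q.out * c ^ k))) := by
  have key : (Finset.univ : Finset (G ⧸ Subgroup.zpowers c)).val.map
      (MulAction.toPerm m : Equiv.Perm (G ⧸ Subgroup.zpowers c)) = Finset.univ.val :=
    Multiset.map_univ_val_equiv _
  conv => arg 3; rw [← key]
  rw [Multiset.map_map, Multiset.map_map, Multiset.rel_map]
  apply Multiset.rel_refl_of_refl_on
  intro q _
  simp only [Function.comp, MulAction.toPerm_apply]
  have hq : ((m * q.out : G) : G ⧸ Subgroup.zpowers c) = m • q := by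
    conv_rhs => rw [← QuotientGroup.out_eq' q]
    rfl
  have hq' : (((m • q).out : G) : G ⧸ Subgroup.zpowers c) = (m * q.out : G) := by
    rw [hq]; exact QuotientGroup.out_eq' _
  obtain ⟨j, hj, e⟩ : ∃ j < orderOf c, (m * q.out) * c ^ j = (m • q).out := by
    rw [eq_comm, QuotientGroup.eq, ← mem_powers_iff_mem_zpowers] at hq'
    classical
    rw [mem_powers_iff_mem_range_orderOf] at hq'
    simp only [Finset.mem_image, Finset.mem_range] at hq'
    obtain ⟨k, hk, h⟩ := hq'
    exact ⟨k, hk, by rw [h]; group⟩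
  obtain ⟨r, hr⟩ := rot_flatMap (fun k => B (m * q.out * c ^ k)) (orderOf c) j hj.le
    (by intro k; simp [pow_add, pow_orderOf_eq_one])
  refine ⟨r, ?_⟩
  rw [List.map_flatMap]
  simp only [hf, ← mul_assoc]
  rw [hr]
  apply List.flatMap_congr
  intro k _
  rw [← e, pow_add, mul_assoc (m * q.out)]

end FruchtAux

namespace FruchtAux

variable {G : Type*} [Group G]

def E (g1 g2 : G) (i : Fin 9) (g : G) : Sym2 (Fin 6 × G) :=
  match i with
  | 0 => s((0, g), (1, g))
  | 1 => s((1, g), (2, g))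
  | 2 => s((0, g), (2, g))
  | 3 => s((0, g), (3, g))
  | 4 => s((1, g), (5, g))
  | 5 => s((4, g), (5, g))
  | 6 => s((3, g), (4, g))
  | 7 => s((2, g), (3, g * g1))
  | 8 => s((4, g), (5, g * g2))

theorem E_inj (g1 g2 : G) (h2 : g2 ≠ 1) (i j : Fin 9) (g h : G) :
    E g1 g2 i g = E g1 g2 j h ↔ i = j ∧ g = h := by
  constructor
  · have z1 : ∀ h : G, h ≠ h * g2 := by intro h; simpa using h2
    intro H
    fin_cases i <;> fin_cases j <;> simp [E] at H ⊢ <;> (try exact H) <;> (try exact H.1) <;>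
      grind
  · rintro ⟨rfl, rfl⟩; rfl

theorem mem_edgeSet (g1 g2 : G) (e : Sym2 (Fin 6 × G)) :
    e ∈ (fruchtGraph G g1 g2).edgeSet ↔ ∃ i g, e = E g1 g2 i g := by
  unfold fruchtGraph
  rw [SimpleGraph.edgeSet_fromEdgeSet]
  constructor
  · rintro ⟨h, -⟩
    simp only [Set.mem_iUnion, Set.mem_insert_iff, Set.mem_singleton_iff] at h
    obtain ⟨g, h⟩ := h
    rcases h with h | h | h | h | h | h | h | h | h
    exacts [⟨0, g, h⟩, ⟨1, g, h⟩, ⟨2, g, h⟩, ⟨3, g, h⟩, ⟨4, g, h⟩, ⟨5, g, h⟩, ⟨6, g, h⟩,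
      ⟨7, g, h⟩, ⟨8, g, h⟩]
  · rintro ⟨i, g, rfl⟩
    refine ⟨?_, ?_⟩
    · simp only [Set.mem_iUnion, Set.mem_insert_iff, Set.mem_singleton_iff]
      refine ⟨g, ?_⟩
      fin_cases i <;> simp [E]
    · fin_cases i <;> simp [E]

inductive Face (g1 g2 : G) where
  | tri (g : G)
  | pent (g : G)
  | c2 (q : G ⧸ Subgroup.zpowers g2)
  | c1 (q : G ⧸ Subgroup.zpowers g1)
  | lg (q : G ⧸ Subgroup.zpowers (g1 * g2))

noncomputable def Face.list {g1 g2 : G} : Face g1 g2 → List (Fin 6 × G)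
  | .tri g => [((0 : Fin 6), g), (1, g), (2, g)]
  | .pent g => [((0 : Fin 6), g), (1, g), (5, g), (4, g), (3, g)]
  | .c2 q => (List.range (orderOf g2)).flatMap fun k =>
      [((5 : Fin 6), q.out * g2 ^ k), (4, q.out * g2 ^ k)]
  | .c1 q => (List.range (orderOf g1)).flatMap fun k =>
      [((3 : Fin 6), q.out * g1 ^ k), (0, q.out * g1 ^ k), (2, q.out * g1 ^ k)]
  | .lg q => (List.range (orderOf (g1 * g2))).flatMap fun k =>
      [((5 : Fin 6), q.out * (g1 * g2) ^ k), (1, q.out * (g1 * g2) ^ k),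
       (2, q.out * (g1 * g2) ^ k), (3, q.out * (g1 * g2) ^ k * g1),
       (4, q.out * (g1 * g2) ^ k * g1)]

def Face.In {g1 g2 : G} (i : Fin 9) (x : G) : Face g1 g2 → Prop
  | .tri g => x = g ∧ (i = 0 ∨ i = 1 ∨ i = 2)
  | .pent g => x = g ∧ (i = 0 ∨ i = 3 ∨ i = 4 ∨ i = 5 ∨ i = 6)
  | .c2 q => (x : G ⧸ Subgroup.zpowers g2) = q ∧ (i = 5 ∨ i = 8)
  | .c1 q => (x : G ⧸ Subgroup.zpowers g1) = q ∧ (i = 2 ∨ i = 3 ∨ i = 7)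
  | .lg q => ((x : G ⧸ Subgroup.zpowers (g1 * g2)) = q ∧ (i = 1 ∨ i = 4 ∨ i = 7)) ∨
     (((x * g1⁻¹ : G) : G ⧸ Subgroup.zpowers (g1 * g2)) = q ∧ (i = 6 ∨ i = 8))

variable [Fintype G]

theorem mem_face (g1 g2 : G) (F : Face g1 g2) (e : Sym2 (Fin 6 × G)) :
    e ∈ cycleEdges F.list ↔ ∃ i x, F.In i x ∧ e = E g1 g2 i x := by
  have sw : ∀ a b : Fin 6 × G, s(a, b) = s(b, a) := fun a b => Sym2.eq_swap
  cases F with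
  | tri g =>
    simp only [Face.list, Face.In, cycleEdges_cons, pathE]
    simp only [List.cons_append, List.nil_append, List.tail_cons, List.zipWith_cons_cons,
      List.zipWith_nil_right, List.mem_cons, List.not_mem_nil, or_false]
    constructor
    · rintro (h | h | h)
      · exact ⟨0, g, by simp, h⟩
      · exact ⟨1, g, by simp, h⟩
      · exact ⟨2, g, by simp, h.trans (sw _ _)⟩
    · rintro ⟨i, x, ⟨rfl, rfl | rfl | rfl⟩, rfl⟩ <;> simp [E]
  | pent g =>
    simp only [Face.list, Face.In, cycleEdges_cons, pathE]
    simp only [List.cons_append, List.nil_append, List.tail_cons, List.zipWith_cons_cons,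
      List.zipWith_nil_right, List.mem_cons, List.not_mem_nil, or_false]
    constructor
    · rintro (h | h | h | h | h)
      · exact ⟨0, g, by simp, h⟩
      · exact ⟨4, g, by simp, h⟩
      · exact ⟨5, g, by simp, h.trans (sw _ _)⟩
      · exact ⟨6, g, by simp, h.trans (sw _ _)⟩
      · exact ⟨3, g, by simp, h.trans (sw _ _)⟩
    · rintro ⟨i, x, ⟨rfl, rfl | rfl | rfl | rfl | rfl⟩, rfl⟩ <;> simp [E]
  | c2 q =>
    simp only [Face.list, Face.In]
    rw [mem_cyc g2 (fun y => ((5 : Fin 6), y)) (fun y => [(4, y)])]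
    simp only [pathE]
    simp only [List.cons_append, List.nil_append, List.tail_cons, List.zipWith_cons_cons,
      List.zipWith_nil_right, List.mem_cons, List.not_mem_nil, or_false]
    constructor
    · rintro ⟨y, hy, h | h⟩
      · exact ⟨5, y, by simp [hy], h.trans (sw _ _)⟩
      · exact ⟨8, y, by simp [hy], h⟩
    · rintro ⟨i, x, ⟨hx, rfl | rfl⟩, rfl⟩ <;> refine ⟨x, hx, ?_⟩ <;> simp [E]
  | c1 q =>
    simp only [Face.list, Face.In]
    rw [mem_cyc g1 (fun y => ((3 : Fin 6), y)) (fun y => [(0, y), (2, y)])]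
    simp only [pathE]
    simp only [List.cons_append, List.nil_append, List.tail_cons, List.zipWith_cons_cons,
      List.zipWith_nil_right, List.mem_cons, List.not_mem_nil, or_false]
    constructor
    · rintro ⟨y, hy, h | h | h⟩
      · exact ⟨3, y, by simp [hy], h.trans (sw _ _)⟩
      · exact ⟨2, y, by simp [hy], h⟩
      · exact ⟨7, y, by simp [hy], h⟩
    · rintro ⟨i, x, ⟨hx, rfl | rfl | rfl⟩, rfl⟩ <;> refine ⟨x, hx, ?_⟩ <;> simp [E]
  | lg q =>
    simp only [Face.list, Face.In]
    rw [mem_cyc (g1 * g2) (fun y => ((5 : Fin 6), y))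
      (fun y => [(1, y), (2, y), (3, y * g1), (4, y * g1)])]
    simp only [pathE]
    simp only [List.cons_append, List.nil_append, List.tail_cons, List.zipWith_cons_cons,
      List.zipWith_nil_right, List.mem_cons, List.not_mem_nil, or_false]
    constructor
    · rintro ⟨y, hy, h | h | h | h | h⟩
      · exact ⟨4, y, by simp [hy], h.trans (sw _ _)⟩
      · exact ⟨1, y, by simp [hy], h⟩
      · exact ⟨7, y, by simp [hy], h⟩
      · exact ⟨6, y * g1, by simp [hy], h⟩
      · exact ⟨8, y * g1, by simp [hy], by rw [h]; simp [E, mul_assoc]⟩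
    · rintro ⟨i, x, ⟨hx, rfl | rfl | rfl⟩ | ⟨hx, rfl | rfl⟩, rfl⟩ <;> refine ⟨_, hx, ?_⟩ <;>
        simp [E]

theorem mem_face_E (g1 g2 : G) (h2 : g2 ≠ 1) (F : Face g1 g2) (i : Fin 9) (x : G) :
    E g1 g2 i x ∈ cycleEdges F.list ↔ F.In i x := by
  rw [mem_face]
  constructor
  · rintro ⟨j, y, h, e⟩
    obtain ⟨rfl, rfl⟩ := (E_inj g1 g2 h2 _ _ _ _).1 e
    exact h
  · intro h; exact ⟨i, x, h, rfl⟩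

open scoped Classical in
theorem cdc_eq (g1 g2 : G) : fruchtCDC G g1 g2 =
    (Finset.univ : Finset G).val.map (fun g => (Face.tri g : Face g1 g2).list) +
    (Finset.univ : Finset G).val.map (fun g => (Face.pent g : Face g1 g2).list) +
    (Finset.univ : Finset (G ⧸ Subgroup.zpowers g2)).val.map
      (fun q => (Face.c2 q : Face g1 g2).list) +
    (Finset.univ : Finset (G ⧸ Subgroup.zpowers g1)).val.map
      (fun q => (Face.c1 q : Face g1 g2).list) +
    (Finset.univ : Finset (G ⧸ Subgroup.zpowers (g1 * g2))).val.map
      (fun q => (Face.lg q : Face g1 g2).list) := rfl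

theorem mem_cdc (g1 g2 : G) (l : List (Fin 6 × G)) (h : l ∈ fruchtCDC G g1 g2) :
    ∃ F : Face g1 g2, F.list = l := by
  rw [cdc_eq] at h
  simp only [Multiset.mem_add, Multiset.mem_map] at h
  rcases h with (((⟨g, -, h⟩ | ⟨g, -, h⟩) | ⟨g, -, h⟩) | ⟨g, -, h⟩) | ⟨g, -, h⟩
  exacts [⟨_, h⟩, ⟨_, h⟩, ⟨_, h⟩, ⟨_, h⟩, ⟨_, h⟩]

theorem isCycle (g1 g2 : G) (h2 : g2 ≠ 1) (F : Face g1 g2) :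
    IsCycleList (fruchtGraph G g1 g2) F.list := by
  refine ⟨?_, ?_, ?_⟩
  · have o1 := orderOf_pos g1
    have o2 := orderOf_pos g2
    have o3 := orderOf_pos (g1 * g2)
    have o2' : orderOf g2 ≠ 1 := by simpa using h2
    cases F <;> simp [Face.list, List.length_flatMap] <;> omega
  · cases F with
    | tri g => simp [Face.list]
    | pent g => simp [Face.list]
    | c2 q =>
      refine nodup_cyc g2 (fun y => [((5 : Fin 6), y), (4, y)]) q.out ?_ ?_
      · intro y; simp
      · intro y z h; simp [h, h.symm]
    | c1 q =>
      refine nodup_cyc g1 (fun y => [((3 : Fin 6), y), (0, y), (2, y)]) q.out ?_ ?_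
      · intro y; simp
      · intro y z h; simp [h, h.symm]
    | lg q =>
      refine nodup_cyc (g1 * g2) (fun y => [((5 : Fin 6), y), (1, y), (2, y), (3, y * g1),
        (4, y * g1)]) q.out ?_ ?_
      · intro y; simp
      · intro y z h; simp [h, h.symm]
  · intro e he
    rw [mem_face] at he
    obtain ⟨i, x, -, rfl⟩ := he
    exact (mem_edgeSet _ _ _).2 ⟨_, _, rfl⟩

theorem isCDC (g1 g2 : G) (h2 : g2 ≠ 1) :
    IsCycleDoubleCover (fruchtGraph G g1 g2) (fruchtCDC G g1 g2) := by
  classical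
  refine ⟨?_, ?_⟩
  · intro l hl
    obtain ⟨F, rfl⟩ := mem_cdc g1 g2 l hl
    exact isCycle g1 g2 h2 F
  · intro e he
    obtain ⟨i, x, rfl⟩ := (mem_edgeSet _ _ _).1 he
    rw [cdc_eq]
    simp only [Multiset.map_add, Multiset.map_map, Multiset.sum_add, Function.comp_def,
      mem_face_E g1 g2 h2, Finset.sum_map_val]
    fin_cases i <;> simp [Face.In]

theorem rel_inv (g1 g2 m : G) :
    Multiset.Rel (fun l₁ l₂ => ∃ k, l₁.rotate k = l₂)
        ((fruchtCDC G g1 g2).map (List.map fun v => (v.1, m * v.2)))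
        (fruchtCDC G g1 g2) := by
  classical
  have key : (Finset.univ : Finset G).val.map (Equiv.mulLeft m) = Finset.univ.val :=
    Multiset.map_univ_val_equiv _
  have aux : ∀ B : G → List (Fin 6 × G),
      (∀ y, (B y).map (fun v => (v.1, m * v.2)) = B (m * y)) →
      Multiset.Rel (fun l₁ l₂ : List (Fin 6 × G) => ∃ k, l₁.rotate k = l₂)
        (((Finset.univ : Finset G).val.map B).map (List.map fun v => (v.1, m * v.2)))
        ((Finset.univ : Finset G).val.map B) := by
    intro B hB
    conv => arg 3; rw [← key]
    rw [Multiset.map_map, Multiset.map_map, Multiset.rel_map]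
    apply Multiset.rel_refl_of_refl_on
    intro q _
    exact ⟨0, by simp [hB]⟩
  unfold fruchtCDC
  simp only [Multiset.map_add]
  refine (((Multiset.Rel.add ?_ ?_).add ?_).add ?_).add ?_
  · apply aux; intro y; simp
  · apply aux; intro y; simp
  · refine rel_cyc g2 m (fun y => [((5 : Fin 6), y), (4, y)]) _ ?_ _
    intro y; simp
  · refine rel_cyc g1 m (fun y => [((3 : Fin 6), y), (0, y), (2, y)]) _ ?_ _
    intro y; simp
  · refine rel_cyc (g1 * g2) m (fun y => [((5 : Fin 6), y), (1, y), (2, y), (3, y * g1),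
        (4, y * g1)]) _ ?_ _
    intro y; simp [mul_assoc]

set_option maxHeartbeats 2000000 in
theorem share (g1 g2 : G) (h1 : g1 ≠ 1)
    (H1 : Subgroup.zpowers g1 ⊓ Subgroup.zpowers (g1 * g2) = ⊥)
    (H2 : Subgroup.zpowers g2 ⊓ Subgroup.zpowers (g1 * g2) = ⊥)
    (F F' : Face g1 g2) (hne : F ≠ F') (i j : Fin 9) (x y : G)
    (a : F.In i x) (a' : F'.In i x) (b : F.In j y) (b' : F'.In j y) : i = j ∧ x = y := by
  have K1 : ∀ x : G, (x : G ⧸ Subgroup.zpowers (g1 * g2)) ≠ ((x * g1⁻¹ : G) : G ⧸ _) := by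
    intro x h
    rw [QuotientGroup.eq] at h
    simp at h
    have : g1 ∈ Subgroup.zpowers g1 ⊓ Subgroup.zpowers (g1 * g2) := ⟨by simp, h⟩
    rw [H1] at this
    exact h1 (by simpa using this)
  have K2 : ∀ x y : G, (x : G ⧸ Subgroup.zpowers g1) = y →
      (x : G ⧸ Subgroup.zpowers (g1 * g2)) = y → x = y := by
    intro x y h h'
    rw [QuotientGroup.eq] at h h'
    have : x⁻¹ * y ∈ Subgroup.zpowers g1 ⊓ Subgroup.zpowers (g1 * g2) := ⟨h, h'⟩
    rw [H1, Subgroup.mem_bot, inv_mul_eq_one] at this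
    exact this
  have K3 : ∀ x y : G, (x : G ⧸ Subgroup.zpowers g2) = y →
      ((x * g1⁻¹ : G) : G ⧸ Subgroup.zpowers (g1 * g2)) = (y * g1⁻¹ : G) → x = y := by
    intro x y h h'
    rw [QuotientGroup.eq] at h h'
    have hg : g2 ∈ Subgroup.zpowers g2 := by simp
    have hc : g1 * g2 ∈ Subgroup.zpowers (g1 * g2) := by simp
    have : g2⁻¹ * (x⁻¹ * y) * g2 ∈ Subgroup.zpowers g2 ⊓ Subgroup.zpowers (g1 * g2) := by
      refine Subgroup.mem_inf.2 ⟨mul_mem (mul_mem (inv_mem hg) h) hg, ?_⟩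
      have := mul_mem (mul_mem (inv_mem hc) h') hc
      convert this using 1
      group
    rw [H2, Subgroup.mem_bot] at this
    have h3 : x⁻¹ * y = 1 := by
      have e : x⁻¹ * y = g2 * (g2⁻¹ * (x⁻¹ * y) * g2) * g2⁻¹ := by group
      rw [e, this]; group
    rwa [inv_mul_eq_one] at h3
  clear H1 H2 h1
  cases F <;> cases F' <;> simp only [Face.In, ne_eq, Face.tri.injEq, Face.pent.injEq,
    Face.c2.injEq, Face.c1.injEq, Face.lg.injEq] at a a' b b' hne <;> grind

end FruchtAux
/-- The family `fruchtCDC` is a cycle double cover of the simplified Frucht graph; it is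
invariant (as a family of cyclic sequences, i.e. up to rotation) under every automorphism
`σ_m : (i,h) ↦ (i,m·h)`; and if `⟨g1⟩ ⊓ ⟨g1·g2⟩` and `⟨g2⟩ ⊓ ⟨g1·g2⟩` are trivial, then
no two distinct cycles of the cover share more than one common edge. -/
theorem fruchtCDC_isCycleDoubleCover
    (G : Type*) [Group G] [Fintype G] (g1 g2 : G)
    (hne : g1 ≠ g2) (h1 : g1 ≠ 1) (h2 : g2 ≠ 1)
    (hgen : Subgroup.closure {g1, g2} = ⊤) :
    IsCycleDoubleCover (fruchtGraph G g1 g2) (fruchtCDC G g1 g2) ∧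
    (∀ m : G,
      Multiset.Rel (fun l₁ l₂ => ∃ k, l₁.rotate k = l₂)
        ((fruchtCDC G g1 g2).map (List.map fun v => (v.1, m * v.2)))
        (fruchtCDC G g1 g2)) ∧
    ((Subgroup.zpowers g1 ⊓ Subgroup.zpowers (g1 * g2) = ⊥ ∧
      Subgroup.zpowers g2 ⊓ Subgroup.zpowers (g1 * g2) = ⊥) →
      ∀ l₁ ∈ fruchtCDC G g1 g2, ∀ l₂ ∈ fruchtCDC G g1 g2, l₁ ≠ l₂ →
        {e | e ∈ cycleEdges l₁ ∧ e ∈ cycleEdges l₂}.ncard ≤ 1) := by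
  refine ⟨FruchtAux.isCDC g1 g2 h2, FruchtAux.rel_inv g1 g2, ?_⟩
  rintro ⟨H1, H2⟩ l₁ hl₁ l₂ hl₂ hl
  obtain ⟨F, rfl⟩ := FruchtAux.mem_cdc g1 g2 l₁ hl₁
  obtain ⟨F', rfl⟩ := FruchtAux.mem_cdc g1 g2 l₂ hl₂
  have hF : F ≠ F' := fun h => hl (by rw [h])
  rw [Set.ncard_le_one (Set.toFinite _)]
  rintro e ⟨he, he'⟩ e' ⟨hf, hf'⟩
  obtain ⟨i, x, hx, rfl⟩ := (FruchtAux.mem_face g1 g2 F e).1 he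
  obtain ⟨j, y, hy, rfl⟩ := (FruchtAux.mem_face g1 g2 F e').1 hf
  rw [FruchtAux.mem_face_E g1 g2 h2] at he' hf'
  obtain ⟨rfl, rfl⟩ := FruchtAux.share g1 g2 h1 H1 H2 F F' hF i j x y hx he' hy hf'
  rfl
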